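/- Let α ∈ [0,1) ∪ [5,∞). Then for every finitely supported function u : ℕ₀ → ℝ with u(0) = 0 one has ∑_{n=1}^∞ |u(n) − u(n−1)|² n^α ≥ ((α−1)²/4) ∑_{n=1}^∞ |u(n)|² n^{α−2}. -/

import Mathlib

/-- `(1-x)^(-γ) - (1+x)^(-γ) ≥ 2γx`. -/
lemma aux_D (γ : ℝ) (hγ : 0 ≤ γ) (x : ℝ) (hx0 : 0 ≤ x) (hx : x < 1) :
    2 * γ * x ≤ (1 - x) ^ (-γ) - (1 + x) ^ (-γ) := by
  have hd : ∀ y ∈ Set.Ico (0:ℝ) 1, HasDerivAt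
      (fun y : ℝ => (1 - y) ^ (-γ) - (1 + y) ^ (-γ) - 2 * γ * y)
      ((-1) * (-γ) * (1 - y) ^ (-γ - 1) - 1 * (-γ) * (1 + y) ^ (-γ - 1) - 2 * γ * 1) y := by
    intro y hy
    have h1 : HasDerivAt (fun y : ℝ => 1 - y) (-1) y := by
      simpa using (hasDerivAt_id y).const_sub 1
    have h2 : HasDerivAt (fun y : ℝ => 1 + y) 1 y := by
      simpa using (hasDerivAt_id y).const_add 1
    have n1 : (1 - y) ≠ 0 := by linarith [hy.2]
    have n2 : (1 + y) ≠ 0 := by linarith [hy.1]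
    exact ((h1.rpow_const (Or.inl n1)).sub (h2.rpow_const (Or.inl n2))).sub
      ((hasDerivAt_id y).const_mul (2 * γ))
  have hm := monotoneOn_of_hasDerivWithinAt_nonneg (convex_Ico (0:ℝ) 1)
    (fun y hy => (hd y hy).continuousAt.continuousWithinAt)
    (fun y hy => (hd y (interior_subset hy)).hasDerivWithinAt) (by
      intro y hy
      have hy' := interior_subset hy
      have p1 : 0 < 1 - y := by linarith [hy'.2]
      have p2 : 0 < 1 + y := by linarith [hy'.1]
      have hA := Real.rpow_pos_of_pos p1 (-γ - 1)
      have hB := Real.rpow_pos_of_pos p2 (-γ - 1)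
      have hAB : 1 ≤ (1 - y) ^ (-γ - 1) * (1 + y) ^ (-γ - 1) := by
        rw [← Real.mul_rpow p1.le p2.le]
        apply Real.one_le_rpow_of_pos_of_le_one_of_nonpos
        · positivity
        · nlinarith [sq_nonneg y]
        · linarith
      have hs : 2 ≤ (1 - y) ^ (-γ - 1) + (1 + y) ^ (-γ - 1) := by
        nlinarith [sq_nonneg ((1 - y) ^ (-γ - 1) - (1 + y) ^ (-γ - 1))]
      nlinarith)
  have := hm (Set.left_mem_Ico.mpr one_pos) ⟨hx0, hx⟩ hx0
  simp at this
  linarith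

lemma aux_F (β : ℝ) (hβ : 0 ≤ β) (hβ1 : β ≤ 1) (x : ℝ) (hx0 : 0 ≤ x) (hx : x < 1) :
    β * (1 - β) * x ^ 2 ≤ 2 - (1 - x) ^ β - (1 + x) ^ β := by
  have hd : ∀ y ∈ Set.Ico (0:ℝ) 1, HasDerivAt
      (fun y : ℝ => 2 - (1 - y) ^ β - (1 + y) ^ β - β * (1 - β) * y ^ 2)
      (-((-1) * β * (1 - y) ^ (β - 1)) - 1 * β * (1 + y) ^ (β - 1)
        - β * (1 - β) * (2 * y)) y := by
    intro y hy
    have h1 : HasDerivAt (fun y : ℝ => 1 - y) (-1) y := by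
      simpa using (hasDerivAt_id y).const_sub 1
    have h2 : HasDerivAt (fun y : ℝ => 1 + y) 1 y := by
      simpa using (hasDerivAt_id y).const_add 1
    have n1 : (1 - y) ≠ 0 := by linarith [hy.2]
    have n2 : (1 + y) ≠ 0 := by linarith [hy.1]
    have h3 : HasDerivAt (fun y : ℝ => y ^ 2) (2 * y) y := by
      simpa using hasDerivAt_pow 2 y
    exact (((h1.rpow_const (Or.inl n1)).const_sub 2).sub (h2.rpow_const (Or.inl n2))).sub
      (h3.const_mul (β * (1 - β)))
  have hm := monotoneOn_of_hasDerivWithinAt_nonneg (convex_Ico (0:ℝ) 1)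
    (fun y hy => (hd y hy).continuousAt.continuousWithinAt)
    (fun y hy => (hd y (interior_subset hy)).hasDerivWithinAt) (by
      intro y hy
      have hy' := interior_subset hy
      have := aux_D (1 - β) (by linarith) y hy'.1 hy'.2
      rw [neg_sub] at this
      nlinarith)
  have := hm (Set.left_mem_Ico.mpr one_pos) ⟨hx0, hx⟩ hx0
  simp at this
  linarith

lemma key_A (β : ℝ) (hβ : 0 < β) (hβ1 : β ≤ 1 / 2) (x : ℝ) (hx0 : 0 ≤ x) (hx : x < 1) :
    β ^ 2 * x ^ 2 ≤ 1 - (1 - x) ^ β + (1 + x) ^ (1 - 2 * β) - (1 + x) ^ (1 - β) := by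
  have hF := aux_F β hβ.le (by linarith) x hx0 hx
  have ht : 0 < 1 + x := by linarith
  have b1 := rpow_one_add_le_one_add_mul_self (s := x) (by linarith) hβ.le (by linarith : β ≤ 1)
  have b2 := rpow_one_add_le_one_add_mul_self (s := x) (p := 1 - 2 * β) (by linarith)
    (by linarith) (by linarith)
  have c1 : 1 ≤ (1 + x) ^ β := Real.one_le_rpow (by linarith) hβ.le
  have c2 : 1 ≤ (1 + x) ^ (1 - 2 * β) := Real.one_le_rpow (by linarith) (by linarith)
  have e : (1 + x) ^ (1 - β) = (1 + x) ^ β * (1 + x) ^ (1 - 2 * β) := by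
    rw [← Real.rpow_add ht]; congr 1; ring
  rw [e]
  have := mul_le_mul (sub_le_iff_le_add'.mpr b1) (sub_le_iff_le_add'.mpr b2) (by linarith)
    (by positivity)
  nlinarith

lemma key_A1 (β : ℝ) (hβ : 0 < β) (hβ1 : β ≤ 1 / 2) :
    β ^ 2 ≤ 1 + (2:ℝ) ^ (1 - 2 * β) - 2 ^ (1 - β) := by
  have e1 : (2:ℝ) ^ (1 - 2 * β) = 2 * (2 ^ (-β)) ^ 2 := by
    rw [show 1 - 2 * β = 1 + (-β + -β) by ring, Real.rpow_add two_pos, Real.rpow_add two_pos,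
      Real.rpow_one]
    ring
  have e2 : (2:ℝ) ^ (1 - β) = 2 * (2 ^ (-β)) := by
    nth_rw 2 [← Real.rpow_one 2]
    rw [← Real.rpow_add two_pos]; congr 1
  rw [e1, e2]
  nlinarith [sq_nonneg ((2:ℝ) ^ (-β) * 2 - 1)]

lemma key_B1 (b : ℝ) (hb : 2 ≤ b) :
    b ^ 2 ≤ 1 + (2:ℝ) ^ (1 + 2 * b) - 2 ^ (1 + b) := by
  have e1 : (2:ℝ) ^ (1 + 2 * b) = 2 * (2 ^ b) ^ 2 := by
    rw [Real.rpow_add two_pos, Real.rpow_one, sq, ← Real.rpow_add two_pos]; congr 2; ring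
  have e2 : (2:ℝ) ^ (1 + b) = 2 * (2 ^ b) := by
    rw [Real.rpow_add two_pos, Real.rpow_one]
  have h := one_add_mul_self_le_rpow_one_add (s := 1) (p := b) (by norm_num) (by linarith)
  norm_num at h
  rw [e1, e2]
  nlinarith

lemma key_B2 (b : ℝ) (hb : 2 ≤ b) :
    b ^ 2 / 4 ≤ 1 - (2:ℝ) ^ b + (3 / 2 : ℝ) ^ (1 + 2 * b) - (3 / 2 : ℝ) ^ (1 + b) := by
  obtain ⟨r, hr⟩ : ∃ r, b = r + 2 := ⟨b - 2, by ring⟩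
  subst hr
  have hr : 0 ≤ r := by linarith
  have hp : (0:ℝ) < 3 / 2 := by norm_num
  set R : ℝ := (3 / 2 : ℝ) ^ r with hR
  have hR1 : 1 ≤ R := Real.one_le_rpow (by norm_num) hr
  have e0 : (3 / 2 : ℝ) ^ (r + 2) = 9 / 4 * R := by
    rw [Real.rpow_add hp, Real.rpow_two]; ring
  have e1 : (3 / 2 : ℝ) ^ (1 + 2 * (r + 2)) = 243 / 32 * R ^ 2 := by
    have : 1 + 2 * (r + 2) = 1 + (r + 2) + (r + 2) := by ring
    rw [this, Real.rpow_add hp, Real.rpow_add hp, e0, Real.rpow_one]; ring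
  have e2 : (3 / 2 : ℝ) ^ (1 + (r + 2)) = 27 / 8 * R := by
    rw [Real.rpow_add hp, e0, Real.rpow_one]; ring
  have hRr : 1 + 2 / 5 * r ≤ R := by
    have h := Real.le_log_one_add_of_nonneg (x := 1 / 2) (by norm_num)
    norm_num at h
    have h2 := Real.add_one_le_exp (Real.log (3 / 2) * r)
    rw [← Real.rpow_def_of_pos hp] at h2
    nlinarith
  have h43 : (4 / 3 : ℝ) ^ r ≤ 1 + 3 / 4 * (R - 1) := by
    have h1 : (4 / 3 : ℝ) ≤ (3 / 2 : ℝ) ^ (3 / 4 : ℝ) := by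
      have : (4 / 3 : ℝ) = ((4 / 3 : ℝ) ^ (4:ℝ)) ^ (1 / 4 : ℝ) := by
        rw [← Real.rpow_mul (by norm_num)]; norm_num
      have h' : (3 / 2 : ℝ) ^ (3 / 4 : ℝ) = ((3 / 2 : ℝ) ^ (3:ℝ)) ^ (1 / 4 : ℝ) := by
        rw [← Real.rpow_mul (by norm_num)]; norm_num
      rw [this, h']
      apply Real.rpow_le_rpow (by positivity) _ (by norm_num)
      norm_num
    calc (4 / 3 : ℝ) ^ r ≤ ((3 / 2 : ℝ) ^ (3 / 4 : ℝ)) ^ r :=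
          Real.rpow_le_rpow (by norm_num) h1 hr
      _ = R ^ (3 / 4 : ℝ) := by
          rw [hR, ← Real.rpow_mul hp.le, ← Real.rpow_mul hp.le, mul_comm]
      _ = (1 + (R - 1)) ^ (3 / 4 : ℝ) := by congr 1; ring
      _ ≤ _ := rpow_one_add_le_one_add_mul_self (by linarith) (by norm_num) (by norm_num)
  have e3 : (2:ℝ) ^ (r + 2) = 4 * (R * (4 / 3 : ℝ) ^ r) := by
    rw [hR, ← Real.mul_rpow hp.le (by norm_num), Real.rpow_add two_pos, Real.rpow_two]
    norm_num; ring
  rw [e1, e2, e3]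
  have h5 : R * (4 / 3 : ℝ) ^ r ≤ R * (1 + 3 / 4 * (R - 1)) := by gcongr
  nlinarith

lemma key_B3 (b : ℝ) (hb : 2 ≤ b) (x : ℝ) (hx0 : 0 < x) (hx : x ≤ 1 / 3) :
    b ^ 2 * x ^ 2 ≤ 1 - (1 - x) ^ (-b) + (1 + x) ^ (1 + 2 * b) - (1 + x) ^ (1 + b) := by
  have ht : 0 < 1 + x := by linarith
  have hs : 0 < 1 - x := by linarith
  set T : ℝ := (1 + x) ^ b with hT
  set y : ℝ := b * x / 2 with hy
  have hyx : x ≤ y := by rw [hy]; nlinarith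
  have hTy : (1 + y) ^ 2 ≤ T := by
    have h := one_add_mul_self_le_rpow_one_add (s := x) (p := b / 2) (by linarith)
      (by linarith)
    have h2 : T = ((1 + x) ^ (b / 2)) ^ 2 := by
      rw [sq, ← Real.rpow_add ht, add_halves]
    rw [h2]
    have : 1 + y = 1 + b / 2 * x := by rw [hy]; ring
    rw [this]
    gcongr
  have e1 : (1 + x) ^ (1 + 2 * b) = (1 + x) * T ^ 2 := by
    rw [Real.rpow_add ht, Real.rpow_one, sq, ← Real.rpow_add ht]; congr 2; ring
  have e2 : (1 + x) ^ (1 + b) = (1 + x) * T := by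
    rw [Real.rpow_add ht, Real.rpow_one]
  have hT1 : 1 ≤ T := by nlinarith
  have hlog : (1 - x)⁻¹ ≤ (1 + x) ^ (1 + (x + x ^ 2)) := by
    rw [← Real.log_le_log_iff (by positivity) (by positivity), Real.log_inv, Real.log_rpow ht]
    have h1 := Real.le_log_one_add_of_nonneg hx0.le
    have h2 := Real.one_sub_inv_le_log_of_pos (mul_pos hs ht)
    rw [Real.log_mul hs.ne' ht.ne'] at h2
    have h3 : ((1 - x) * (1 + x))⁻¹ - 1 ≤ (x + x ^ 2) * (2 * x / (x + 2)) := by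
      have : (x + x ^ 2) * (2 * x / (x + 2)) - (((1 - x) * (1 + x))⁻¹ - 1)
          = x ^ 3 * (1 - 2 * x - 2 * x ^ 2) / ((x + 2) * ((1 - x) * (1 + x))) := by
        field_simp
        ring
      have h4 : 0 ≤ x ^ 3 * (1 - 2 * x - 2 * x ^ 2) / ((x + 2) * ((1 - x) * (1 + x))) := by
        apply div_nonneg
        · apply mul_nonneg (by positivity); nlinarith
        · positivity
      linarith
    have h4 : (x + x ^ 2) * (2 * x / (x + 2)) ≤ (x + x ^ 2) * Real.log (1 + x) := by gcongr
    linarith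
  have hsb : (1 - x) ^ (-b) ≤ T * (1 + (x + x ^ 2) * (T - 1)) := by
    calc (1 - x) ^ (-b) = ((1 - x)⁻¹) ^ b := by
          rw [Real.rpow_neg hs.le, Real.inv_rpow hs.le]
      _ ≤ ((1 + x) ^ (1 + (x + x ^ 2))) ^ b := by
          apply Real.rpow_le_rpow (by positivity) hlog (by linarith)
      _ = T ^ (1 + (x + x ^ 2)) := by
          rw [hT, ← Real.rpow_mul ht.le, ← Real.rpow_mul ht.le, mul_comm]
      _ = T * (1 + (T - 1)) ^ (x + x ^ 2) := by
          rw [Real.rpow_add (by linarith), Real.rpow_one]; congr 2; ring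
      _ ≤ _ := by
          gcongr
          exact rpow_one_add_le_one_add_mul_self (by linarith) (by positivity) (by nlinarith)
  rw [e1, e2]
  have hb2 : b ^ 2 * x ^ 2 = 4 * y ^ 2 := by rw [hy]; ring
  rw [hb2]
  have hy0 : 0 < y := by linarith
  have hpoly : x ^ 2 * ((2 + y) * (1 + y) ^ 2) ≤ y ^ 2 * (4 + y) := by
    have a1 : x ^ 2 ≤ 1 / 9 := by nlinarith
    have a2 : x ^ 2 ≤ y ^ 2 := by gcongr
    have a3 : x ^ 2 * y ^ 2 ≤ 1 / 9 * y ^ 2 := by gcongr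
    have a4 : x ^ 2 * y ^ 3 ≤ 1 / 9 * y ^ 3 := by gcongr
    have a5 : 5 * x ^ 2 ≤ 14 / 9 * y + 8 / 9 * y ^ 2 := by nlinarith
    have a6 : y * (5 * x ^ 2) ≤ y * (14 / 9 * y + 8 / 9 * y ^ 2) := by gcongr
    nlinarith
  have hx2 : 0 ≤ 1 - x ^ 2 := by nlinarith
  have f1 : y * (2 + y) ≤ T - 1 := by nlinarith
  have f2 : (1 - x ^ 2) * (1 + y) ^ 2 - 1 ≤ (1 - x ^ 2) * T - 1 := by
    have := mul_le_mul_of_nonneg_left hTy hx2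
    linarith
  have f3 : 4 * y ≤ (2 + y) * ((1 - x ^ 2) * (1 + y) ^ 2 - 1) := by nlinarith
  have f4 : 0 ≤ (1 - x ^ 2) * (1 + y) ^ 2 - 1 := by
    by_contra h
    push Not at h
    nlinarith
  have f5 : y * (2 + y) * ((1 - x ^ 2) * (1 + y) ^ 2 - 1) ≤ (T - 1) * ((1 - x ^ 2) * T - 1) :=
    mul_le_mul f1 f2 f4 (by linarith)
  have f6 : y * (4 * y) ≤ y * ((2 + y) * ((1 - x ^ 2) * (1 + y) ^ 2 - 1)) := by gcongr
  nlinarith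

lemma key_all (β : ℝ) (hβ : (0 < β ∧ β ≤ 1 / 2) ∨ β ≤ -2) (n : ℕ) (x : ℝ)
    (hx : x = ((n : ℝ) + 1)⁻¹) :
    β ^ 2 * x ^ 2 ≤ 1 - (1 - x) ^ β + (1 + x) ^ (1 - 2 * β) - (1 + x) ^ (1 - β) := by
  have hx0 : 0 < x := by rw [hx]; positivity
  have hβ0 : β ≠ 0 := by rcases hβ with h | h <;> [exact h.1.ne'; linarith]
  rcases Nat.eq_zero_or_pos n with h0 | hn
  · have h1 : x = 1 := by rw [hx, h0]; norm_num
    rw [h1, sub_self, Real.zero_rpow hβ0]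
    norm_num
    rcases hβ with h | h
    · have := key_A1 β h.1 h.2
      linarith
    · have := key_B1 (-β) (by linarith)
      ring_nf at this ⊢
      linarith
  have hn' : (1:ℝ) ≤ n := by exact_mod_cast hn
  rcases hβ with h | h
  · refine key_A β h.1 h.2 x hx0.le ?_
    rw [hx]
    apply inv_lt_one_of_one_lt₀
    linarith
  · rcases Nat.lt_or_ge n 2 with h2 | h2
    · have : n = 1 := by omega
      have h1 : x = 1 / 2 := by rw [hx, this]; norm_num
      have hk := key_B2 (-β) (by linarith)
      have e : (1 - (1 / 2) : ℝ) ^ β = 2 ^ (-β) := by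
        rw [show (1 - 1 / 2 : ℝ) = 2⁻¹ by norm_num, Real.inv_rpow (by norm_num),
          Real.rpow_neg (by norm_num)]
      rw [h1, e]
      rw [show (1 + 1 / 2 : ℝ) = 3 / 2 by norm_num, show 1 - 2 * β = 1 + 2 * (-β) by ring,
        show 1 - β = 1 + -β by ring]
      linarith
    · have h2' : (2:ℝ) ≤ n := by exact_mod_cast h2
      have hk := key_B3 (-β) (by linarith) x hx0 (by
        rw [hx, one_div]
        apply inv_anti₀ <;> linarith)
      rw [neg_neg] at hk
      rw [show 1 - 2 * β = 1 + 2 * (-β) by ring, show 1 - β = 1 + -β by ring]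
      linarith

/-- The recursive weight inequality. -/
lemma key_w (α β : ℝ) (hαβ : α = 1 - 2 * β) (hβ : (0 < β ∧ β ≤ 1 / 2) ∨ β ≤ -2) (n : ℕ) :
    ((n:ℝ) + 2) ^ α * ((((n:ℝ) + 2) / (n + 1)) ^ β - 1) + β ^ 2 * ((n:ℝ) + 1) ^ (α - 2)
      ≤ ((n:ℝ) + 1) ^ α * (1 - ((n:ℝ) / (n + 1)) ^ β) := by
  have hm : (0:ℝ) < (n:ℝ) + 1 := by positivity
  have hk := key_all β hβ n _ rfl
  set x := ((n:ℝ) + 1)⁻¹ with hx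
  have hx0 : 0 < x := by positivity
  have e1 : ((n:ℝ) + 2) / (n + 1) = 1 + x := by rw [hx]; field_simp; ring
  have e2 : (n:ℝ) / (n + 1) = 1 - x := by rw [hx]; field_simp; ring
  have e3 : ((n:ℝ) + 2) ^ α = ((n:ℝ) + 1) ^ α * (1 + x) ^ α := by
    rw [← Real.mul_rpow hm.le (by positivity)]; congr 1; rw [hx]; field_simp; ring
  have e4 : ((n:ℝ) + 1) ^ (α - 2) = ((n:ℝ) + 1) ^ α * x ^ 2 := by
    rw [Real.rpow_sub hm, Real.rpow_two, hx]; field_simp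
  have e5 : (1 + x) ^ (1 - β) = (1 + x) ^ α * (1 + x) ^ β := by
    rw [← Real.rpow_add (by positivity)]; congr 1; rw [hαβ]; ring
  rw [e1, e2, e3, e4]
  rw [e5, ← hαβ] at hk
  have hp : 0 < ((n:ℝ) + 1) ^ α := by positivity
  have := mul_le_mul_of_nonneg_left hk hp.le
  linarith

lemma partial_sum (α β : ℝ) (hαβ : α = 1 - 2 * β) (hβ : (0 < β ∧ β ≤ 1 / 2) ∨ β ≤ -2)
    (u : ℕ → ℝ) (h0 : u 0 = 0) (N : ℕ) :
    β ^ 2 * ∑ n ∈ Finset.range N, |u (n + 1)| ^ 2 * ((n : ℝ) + 1) ^ (α - 2)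
      + ((N:ℝ) + 1) ^ α * ((((N:ℝ) + 1) / N) ^ β - 1) * u N ^ 2
    ≤ ∑ n ∈ Finset.range N, |u (n + 1) - u n| ^ 2 * ((n : ℝ) + 1) ^ α := by
  have hβ0 : β ≠ 0 := by rcases hβ with h | h <;> [exact h.1.ne'; linarith]
  induction N with
  | zero => simp [h0]
  | succ N ih =>
    rw [Finset.sum_range_succ, Finset.sum_range_succ]
    simp only [sq_abs] at ih ⊢
    have hw := mul_le_mul_of_nonneg_right (key_w α β hαβ hβ N) (sq_nonneg (u (N + 1)))
    have hp : 0 < ((N:ℝ) + 1) ^ α := by positivity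
    have hstep : ((N:ℝ) + 1) ^ α * (1 - ((N:ℝ) / (N + 1)) ^ β) * u (N + 1) ^ 2
        ≤ (u (N + 1) - u N) ^ 2 * ((N : ℝ) + 1) ^ α
          + ((N:ℝ) + 1) ^ α * ((((N:ℝ) + 1) / N) ^ β - 1) * u N ^ 2 := by
      rcases Nat.eq_zero_or_pos N with h | h
      · subst h
        simp [h0, Real.zero_rpow hβ0]
      · have hN : (0:ℝ) < N := by exact_mod_cast h
        have hr : 0 < (((N:ℝ) + 1) / N) ^ β := by positivity
        have e : ((N:ℝ) / (N + 1)) ^ β = ((((N:ℝ) + 1) / N) ^ β)⁻¹ := by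
          rw [← Real.inv_rpow (by positivity), inv_div]
        rw [e]
        set r := (((N:ℝ) + 1) / N) ^ β
        have key : (u (N + 1) - u N) ^ 2 + (r - 1) * u N ^ 2 - (1 - r⁻¹) * u (N + 1) ^ 2
            = (r * u N - u (N + 1)) ^ 2 / r := by
          field_simp
          ring
        have h2 : 0 ≤ (r * u N - u (N + 1)) ^ 2 / r := by positivity
        have := mul_nonneg hp.le (key ▸ h2)
        linarith
    push_cast
    have e2 : (N:ℝ) + 1 + 1 = N + 2 := by ring
    rw [e2]
    linarith

/-- Corollary 2.3: weighted discrete Hardy inequality with power weight `n^α`. -/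
theorem discrete_weighted_hardy_power_weight (α : ℝ)
    (hα : α ∈ Set.Ico (0 : ℝ) 1 ∪ Set.Ici (5 : ℝ))
    (u : ℕ → ℝ) (hsupp : ∃ N : ℕ, ∀ n ≥ N, u n = 0) (h0 : u 0 = 0) :
    ∑' n : ℕ, |u (n + 1) - u n| ^ 2 * ((n : ℝ) + 1) ^ α ≥
      (α - 1) ^ 2 / 4 * ∑' n : ℕ, |u (n + 1)| ^ 2 * ((n : ℝ) + 1) ^ (α - 2) := by
  obtain ⟨N, hN⟩ := hsupp
  have hs1 : ∑' n : ℕ, |u (n + 1) - u n| ^ 2 * ((n : ℝ) + 1) ^ α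
      = ∑ n ∈ Finset.range N, |u (n + 1) - u n| ^ 2 * ((n : ℝ) + 1) ^ α := by
    apply tsum_eq_sum
    intro n hn
    have : N ≤ n := by simpa using hn
    simp [hN n this, hN (n + 1) (by omega)]
  have hs2 : ∑' n : ℕ, |u (n + 1)| ^ 2 * ((n : ℝ) + 1) ^ (α - 2)
      = ∑ n ∈ Finset.range N, |u (n + 1)| ^ 2 * ((n : ℝ) + 1) ^ (α - 2) := by
    apply tsum_eq_sum
    intro n hn
    have : N ≤ n := by simpa using hn
    simp [hN (n + 1) (by omega)]
  have hp := partial_sum α ((1 - α) / 2) (by ring) (by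
    rcases hα with h | h
    · left; constructor <;> linarith [h.1, h.2]
    · right; have : 5 ≤ α := h
      linarith) u h0 N
  rw [hN N le_rfl] at hp
  rw [hs1, hs2, ge_iff_le]
  have e : (α - 1) ^ 2 / 4 = ((1 - α) / 2) ^ 2 := by ring
  rw [e]
  linarith
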